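/- Let 𝒳 and 𝒲 be standard Borel spaces, R a probability measure on 𝒲, and f : 𝒳 × 𝒲 → 𝒳 measurable with t-step transition maps F_t. For probability measures Φ, Ψ on 𝒳 define J_1(Φ, Ψ) := inf { ∫_𝒳 D(κ(x) ‖ R) dΦ(x) : κ a Markov kernel from 𝒳 to 𝒲 with κ(x) ≪ R for Φ-a.e. x and (Φ ⊗ κ) ∘ f⁻¹ = Ψ }. Then for every t ≥ 1 and every probability measure Φ on 𝒳, the minimum conditional relative entropy supply required to maintain the state distribution equal to Φ at all times satisfies: inf { ∫_𝒳 D(κ(x) ‖ R^{⊗t}) dΦ(x) : κ a Markov kernel from 𝒳 to 𝒲^t with κ(x) ≪ R^{⊗t} for Φ-a.e. x and (Φ ⊗ κ) ∘ F_k⁻¹ = Φ for all k = 1, …, t } = t · J_1(Φ, Φ), with both sides valued in [0,∞]. (Here the pushforward under F_k is taken of the marginal of Φ ⊗ κ on 𝒳 × 𝒲^k.) -/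

import Mathlib

open MeasureTheory ProbabilityTheory
open scoped ENNReal ProbabilityTheory Classical

/-- Kullback-Leibler divergence `D(P ‖ Q)`, valued in `[0,∞]`.  For probability measures with
`P ≪ Q` it equals `∫ log (dP/dQ) dP`, computed here in the equivalent nonnegative form
`∫⁻ (φ log φ - φ + 1) dQ` where `φ = dP/dQ`; it is `∞` when `¬ P ≪ Q`. -/
noncomputable def klDiv {α : Type*} [MeasurableSpace α] (P Q : Measure α) : ℝ≥0∞ :=
  if P ≪ Q then
    ∫⁻ x, ENNReal.ofReal ((P.rnDeriv Q x).toReal * Real.log (P.rnDeriv Q x).toReal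
      - (P.rnDeriv Q x).toReal + 1) ∂Q
  else ∞

/-- The `t`-step state transition maps: `F 0 (x, _) = x` and
`F (k+1) (x, w₀, …, w_k) = f (F k (x, w₀, …, w_{k-1}), w_k)`. -/
def stateTrans {𝒳 𝒲 : Type*} (f : 𝒳 × 𝒲 → 𝒳) : (t : ℕ) → 𝒳 × (Fin t → 𝒲) → 𝒳
  | 0, p => p.1
  | t + 1, p => f (stateTrans f t (p.1, fun i => p.2 i.castSucc), p.2 (Fin.last t))

/-- The minimum required conditional relative entropy supply to drive the state distribution
from `Φ` to `Ψ` under the transition map `F : 𝒳 × 𝒱 → 𝒳` (for `J_t` take `𝒱 = 𝒲^t`,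
`F = F_t` and `Rt = R^{⊗t}`): the infimum over all Markov kernels `κ` with `κ x ≪ Rt` for
`Φ`-a.e. `x` and `(Φ ⊗ κ) ∘ F⁻¹ = Ψ` of `∫ D(κ(x) ‖ Rt) dΦ(x)`, with `inf ∅ = ∞`. -/
noncomputable def reqSupply {𝒳 𝒱 : Type*} [MeasurableSpace 𝒳] [MeasurableSpace 𝒱]
    (F : 𝒳 × 𝒱 → 𝒳) (Rt : Measure 𝒱) (Φ Ψ : Measure 𝒳) : ℝ≥0∞ :=
  ⨅ (κ : Kernel 𝒳 𝒱) (_ : IsMarkovKernel κ) (_ : ∀ᵐ x ∂Φ, κ x ≪ Rt)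
    (_ : (Φ ⊗ₘ κ).map F = Ψ), ∫⁻ x, klDiv (κ x) Rt ∂Φ

theorem kl_eq {α : Type*} [MeasurableSpace α] (P Q : Measure α) [IsFiniteMeasure P]
    [IsFiniteMeasure Q] : klDiv P Q = InformationTheory.klDiv P Q := by
  rw [InformationTheory.klDiv_eq_lintegral_klFun, klDiv]
  congr 1
  refine lintegral_congr fun x => ?_
  rw [InformationTheory.klFun_apply]
  congr 1
  ring

theorem kl_cond {𝒳 𝒱 : Type*} [MeasurableSpace 𝒳] [MeasurableSpace 𝒱] [StandardBorelSpace 𝒱]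
    (Φ : Measure 𝒳) [IsProbabilityMeasure Φ] (Q : Measure 𝒱) [IsProbabilityMeasure Q]
    (κ : Kernel 𝒳 𝒱) [IsMarkovKernel κ] (hac : ∀ᵐ x ∂Φ, κ x ≪ Q) :
    ∃ m : 𝒳 → ℝ≥0∞, Measurable m ∧ (∀ x, κ x ≪ Q → klDiv (κ x) Q = m x) ∧
      InformationTheory.klDiv (Φ ⊗ₘ κ) (Φ.prod Q) = ∫⁻ x, m x ∂Φ := by
  set η : Kernel 𝒳 𝒱 := Kernel.const 𝒳 Q with hη
  have hmeas : Measurable fun p : 𝒳 × 𝒱 => ENNReal.ofReal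
      (InformationTheory.klFun (Kernel.rnDeriv κ η p.1 p.2).toReal) :=
    (InformationTheory.measurable_klFun.comp
      (Kernel.measurable_rnDeriv κ η).ennreal_toReal).ennreal_ofReal
  refine ⟨fun x => ∫⁻ w, ENNReal.ofReal
      (InformationTheory.klFun (Kernel.rnDeriv κ η x w).toReal) ∂Q, ?_, ?_, ?_⟩
  · exact hmeas.lintegral_prod_right'
  · intro x hx
    rw [kl_eq, InformationTheory.klDiv_eq_lintegral_klFun_of_ac hx]
    refine lintegral_congr_ae ?_
    have h := Kernel.rnDeriv_eq_rnDeriv_measure (κ := κ) (η := η) (a := x)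
    simp only [hη, Kernel.const_apply] at h
    filter_upwards [h] with w hw
    rw [hw]
  · have hprod : Φ.prod Q = Φ ⊗ₘ η := by rw [hη, Measure.compProd_const]
    have hac' : Φ ⊗ₘ κ ≪ Φ ⊗ₘ η :=
      Measure.absolutelyContinuous_compProd_right_iff.2 (by simpa [hη] using hac)
    have hwd : Φ ⊗ₘ κ = (Φ ⊗ₘ η).withDensity fun p => Kernel.rnDeriv κ η p.1 p.2 := by
      ext s hs
      rw [withDensity_apply _ hs, ← lintegral_indicator hs, Measure.lintegral_compProd
        ((Kernel.measurable_rnDeriv κ η).indicator hs), Measure.compProd_apply hs]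
      refine lintegral_congr_ae ?_
      filter_upwards [hac] with x hx
      have hx' : κ x ≪ η x := by simpa [hη] using hx
      rw [← Kernel.setLIntegral_rnDeriv hx' (measurable_prodMk_left hs),
        ← lintegral_indicator (measurable_prodMk_left hs)]
      rfl
    rw [hprod, InformationTheory.klDiv_eq_lintegral_klFun_of_ac hac']
    have h2 : (Φ ⊗ₘ κ).rnDeriv (Φ ⊗ₘ η) =ᵐ[Φ ⊗ₘ η] fun p => Kernel.rnDeriv κ η p.1 p.2 := by
      conv_lhs => rw [hwd]
      exact Measure.rnDeriv_withDensity _ (Kernel.measurable_rnDeriv κ η)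
    rw [lintegral_congr_ae (g := fun p : 𝒳 × 𝒱 => ENNReal.ofReal
      (InformationTheory.klFun (Kernel.rnDeriv κ η p.1 p.2).toReal))
      (by filter_upwards [h2] with p hp; rw [hp]), Measure.lintegral_compProd hmeas]
    simp [hη]

theorem kl_cond' {𝒳 𝒱 : Type*} [MeasurableSpace 𝒳] [MeasurableSpace 𝒱] [StandardBorelSpace 𝒱]
    (Φ : Measure 𝒳) [IsProbabilityMeasure Φ] (Q : Measure 𝒱) [IsProbabilityMeasure Q]
    (κ : Kernel 𝒳 𝒱) [IsMarkovKernel κ] (hac : ∀ᵐ x ∂Φ, κ x ≪ Q) :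
    ∫⁻ x, klDiv (κ x) Q ∂Φ = InformationTheory.klDiv (Φ ⊗ₘ κ) (Φ.prod Q) := by
  obtain ⟨m, _, h1, h2⟩ := kl_cond Φ Q κ hac
  rw [h2]
  refine lintegral_congr_ae ?_
  filter_upwards [hac] with x hx using h1 x hx

/-- Pulling back the kernel does not change the conditional divergence. -/
theorem kl_cond_comap {𝒳 𝒴 𝒱 : Type*} [MeasurableSpace 𝒳] [MeasurableSpace 𝒴]
    [MeasurableSpace 𝒱] [StandardBorelSpace 𝒱]
    (Φ : Measure 𝒳) [IsProbabilityMeasure Φ] (Q : Measure 𝒱) [IsProbabilityMeasure Q]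
    (κ : Kernel 𝒳 𝒱) [IsMarkovKernel κ] (hac : ∀ᵐ x ∂Φ, κ x ≪ Q)
    (P : Measure 𝒴) [IsProbabilityMeasure P] (g : 𝒴 → 𝒳) (hg : Measurable g)
    (hP : P.map g = Φ) :
    InformationTheory.klDiv (P ⊗ₘ κ.comap g hg) (P.prod Q)
      = InformationTheory.klDiv (Φ ⊗ₘ κ) (Φ.prod Q) := by
  obtain ⟨m, hm, h1, h2⟩ := kl_cond Φ Q κ hac
  have hac2 : ∀ᵐ y ∂P, κ (g y) ≪ Q := by
    rw [← hP] at hac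
    exact ae_of_ae_map hg.aemeasurable hac
  rw [h2, ← hP, lintegral_map hm hg, ← kl_cond' P Q (κ.comap g hg) (by simpa using hac2)]
  refine lintegral_congr_ae ?_
  filter_upwards [hac2] with y hy
  rw [Kernel.comap_apply]
  exact h1 _ hy

/-- Disintegration of a joint law with prescribed first marginal. -/
theorem exists_kernel {𝒳 𝒱 : Type*} [MeasurableSpace 𝒳]
    [MeasurableSpace 𝒱] [StandardBorelSpace 𝒱] (Φ : Measure 𝒳)
    (ρ : Measure (𝒳 × 𝒱)) [IsProbabilityMeasure ρ] (hρ : ρ.map Prod.fst = Φ) :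
    ∃ κ : Kernel 𝒳 𝒱, IsMarkovKernel κ ∧ Φ ⊗ₘ κ = ρ := by
  have : Nonempty (𝒳 × 𝒱) := nonempty_of_isProbabilityMeasure ρ
  have : Nonempty 𝒱 := this.map Prod.snd
  refine ⟨ρ.condKernel, inferInstance, ?_⟩
  rw [← hρ]
  exact ρ.disintegrate ρ.condKernel

theorem exists_kernel_kl {𝒳 𝒱 : Type*} [MeasurableSpace 𝒳]
    [MeasurableSpace 𝒱] [StandardBorelSpace 𝒱] (Φ : Measure 𝒳) [IsProbabilityMeasure Φ]
    (Q : Measure 𝒱) [IsProbabilityMeasure Q]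
    (ρ : Measure (𝒳 × 𝒱)) [IsProbabilityMeasure ρ] (hρ : ρ.map Prod.fst = Φ)
    (hfin : InformationTheory.klDiv ρ (Φ.prod Q) ≠ ∞) :
    ∃ κ : Kernel 𝒳 𝒱, IsMarkovKernel κ ∧ Φ ⊗ₘ κ = ρ ∧ (∀ᵐ x ∂Φ, κ x ≪ Q) ∧
      ∫⁻ x, klDiv (κ x) Q ∂Φ = InformationTheory.klDiv ρ (Φ.prod Q) := by
  obtain ⟨κ, hκ, rfl⟩ := exists_kernel Φ ρ hρ
  have hac := (InformationTheory.klDiv_ne_top_iff.1 hfin).1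
  rw [← Measure.compProd_const, Measure.absolutelyContinuous_compProd_right_iff] at hac
  have hac' : ∀ᵐ x ∂Φ, κ x ≪ Q := by simpa using hac
  exact ⟨κ, hκ, rfl, hac', kl_cond' Φ Q κ hac'⟩

theorem reqSupply_le {𝒳 𝒱 : Type*} [MeasurableSpace 𝒳]
    [MeasurableSpace 𝒱] [StandardBorelSpace 𝒱] (F : 𝒳 × 𝒱 → 𝒳)
    (Φ Ψ : Measure 𝒳) [IsProbabilityMeasure Φ] (Q : Measure 𝒱) [IsProbabilityMeasure Q]
    (ρ : Measure (𝒳 × 𝒱)) [IsProbabilityMeasure ρ] (hρ : ρ.map Prod.fst = Φ)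
    (hF : ρ.map F = Ψ) :
    reqSupply F Q Φ Ψ ≤ InformationTheory.klDiv ρ (Φ.prod Q) := by
  by_cases hfin : InformationTheory.klDiv ρ (Φ.prod Q) = ∞
  · rw [hfin]; exact le_top
  obtain ⟨κ, hκ, h1, h2, h3⟩ := exists_kernel_kl Φ Q ρ hρ hfin
  rw [← h3]
  exact iInf_le_of_le κ (iInf_le_of_le hκ (iInf_le_of_le h2 (iInf_le_of_le (by rw [h1, hF]) le_rfl)))

/-- Append one more coordinate. -/
def joinE {𝒳 𝒲 : Type*} (t : ℕ) (p : (𝒳 × (Fin t → 𝒲)) × 𝒲) : 𝒳 × (Fin (t + 1) → 𝒲) :=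
  (p.1.1, Fin.snoc (α := fun _ => 𝒲) p.1.2 p.2)

/-- Split off the last coordinate. -/
def splitE {𝒳 𝒲 : Type*} (t : ℕ) (p : 𝒳 × (Fin (t + 1) → 𝒲)) : (𝒳 × (Fin t → 𝒲)) × 𝒲 :=
  ((p.1, fun i => p.2 i.castSucc), p.2 (Fin.last t))

theorem splitE_joinE {𝒳 𝒲 : Type*} (t : ℕ) (p : (𝒳 × (Fin t → 𝒲)) × 𝒲) :
    splitE t (joinE t p) = p := by
  simp [splitE, joinE]

theorem measurable_snoc' {𝒲 : Type*} [MeasurableSpace 𝒲] (t : ℕ) :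
    Measurable fun p : (Fin t → 𝒲) × 𝒲 => (Fin.snoc (α := fun _ => 𝒲) p.1 p.2 : Fin (t+1) → 𝒲) := by
  refine measurable_pi_iff.2 fun i => ?_
  refine Fin.lastCases ?_ (fun j => ?_) i
  · simpa using measurable_snd
  · simp only [Fin.snoc_castSucc]
    exact (measurable_pi_apply j).comp measurable_fst

theorem measurable_joinE {𝒳 𝒲 : Type*} [MeasurableSpace 𝒳] [MeasurableSpace 𝒲] (t : ℕ) :
    Measurable (joinE (𝒳 := 𝒳) (𝒲 := 𝒲) t) :=
  (measurable_fst.comp measurable_fst).prodMk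
    ((measurable_snoc' t).comp ((measurable_snd.comp measurable_fst).prodMk measurable_snd))

theorem measurable_splitE {𝒳 𝒲 : Type*} [MeasurableSpace 𝒳] [MeasurableSpace 𝒲] (t : ℕ) :
    Measurable (splitE (𝒳 := 𝒳) (𝒲 := 𝒲) t) := by
  unfold splitE
  fun_prop

theorem map_snoc_pi {𝒲 : Type*} [MeasurableSpace 𝒲] (R : Measure 𝒲) [IsProbabilityMeasure R]
    (t : ℕ) : ((Measure.pi fun _ : Fin t => R).prod R).map
      (fun p : (Fin t → 𝒲) × 𝒲 => (Fin.snoc (α := fun _ => 𝒲) p.1 p.2 : Fin (t+1) → 𝒲))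
      = Measure.pi fun _ : Fin (t + 1) => R := by
  symm
  refine Measure.pi_eq fun s hs => ?_
  rw [Measure.map_apply (measurable_snoc' t) (MeasurableSet.univ_pi hs)]
  have : (fun p : (Fin t → 𝒲) × 𝒲 => (Fin.snoc (α := fun _ => 𝒲) p.1 p.2 : Fin (t+1) → 𝒲)) ⁻¹'
      (Set.univ.pi s) = (Set.univ.pi fun i : Fin t => s i.castSucc) ×ˢ s (Fin.last t) := by
    ext p
    simp [Set.mem_pi, Fin.forall_fin_succ']
  rw [this, Measure.prod_prod, Measure.pi_pi, Fin.prod_univ_castSucc]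

theorem map_joinE {𝒳 𝒲 : Type*} [MeasurableSpace 𝒳] [MeasurableSpace 𝒲] (R : Measure 𝒲)
    [IsProbabilityMeasure R] (Φ : Measure 𝒳) [IsProbabilityMeasure Φ] (t : ℕ) :
    ((Φ.prod (Measure.pi fun _ : Fin t => R)).prod R).map (joinE t)
      = Φ.prod (Measure.pi fun _ : Fin (t + 1) => R) := by
  rw [← map_snoc_pi R t]
  conv_rhs => rw [← Measure.map_id (μ := Φ)]
  rw [Measure.map_prod_map _ _ measurable_id (measurable_snoc' t), ← Measure.prodAssoc_prod,
    Measure.map_map (measurable_id.prodMap (measurable_snoc' t)) (MeasurableEquiv.measurable _)]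
  rfl

theorem map_splitE {𝒳 𝒲 : Type*} [MeasurableSpace 𝒳] [MeasurableSpace 𝒲] (R : Measure 𝒲)
    [IsProbabilityMeasure R] (Φ : Measure 𝒳) [IsProbabilityMeasure Φ] (t : ℕ) :
    (Φ.prod (Measure.pi fun _ : Fin (t + 1) => R)).map (splitE t)
      = (Φ.prod (Measure.pi fun _ : Fin t => R)).prod R := by
  rw [← map_joinE, Measure.map_map (measurable_splitE t) (measurable_joinE t)]
  have : splitE t ∘ joinE t = (id : (𝒳 × (Fin t → 𝒲)) × 𝒲 → _) := funext (splitE_joinE t)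
  rw [this, Measure.map_id]

theorem measurable_stateTrans {𝒳 𝒲 : Type*} [MeasurableSpace 𝒳] [MeasurableSpace 𝒲]
    (f : 𝒳 × 𝒲 → 𝒳) (hf : Measurable f) : ∀ t, Measurable (stateTrans f t)
  | 0 => measurable_fst
  | t + 1 => by
    have ih := measurable_stateTrans f hf t
    have h : stateTrans f (t + 1) = fun p => f (stateTrans f t (splitE t p).1, (splitE t p).2) := rfl
    rw [h]
    have := measurable_splitE (𝒳 := 𝒳) (𝒲 := 𝒲) t
    fun_prop

/-- The law of the state stays equal to `Φ` at all times up to `t`. -/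
def Tracks {𝒳 𝒲 : Type*} [MeasurableSpace 𝒳] [MeasurableSpace 𝒲] (f : 𝒳 × 𝒲 → 𝒳)
    (Φ : Measure 𝒳) (t : ℕ) (ρ : Measure (𝒳 × (Fin t → 𝒲))) : Prop :=
  ∀ k, ∀ hk : k ≤ t,
    (ρ.map fun p => stateTrans f k (p.1, fun i => p.2 (i.castLE hk))) = Φ

theorem measurable_stateTrans_castLE {𝒳 𝒲 : Type*} [MeasurableSpace 𝒳] [MeasurableSpace 𝒲]
    (f : 𝒳 × 𝒲 → 𝒳) (hf : Measurable f) (k t : ℕ) (hk : k ≤ t) :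
    Measurable fun p : 𝒳 × (Fin t → 𝒲) => stateTrans f k (p.1, fun i => p.2 (i.castLE hk)) := by
  have := measurable_stateTrans f hf k
  fun_prop

theorem Tracks.last {𝒳 𝒲 : Type*} [MeasurableSpace 𝒳] [MeasurableSpace 𝒲] {f : 𝒳 × 𝒲 → 𝒳}
    {Φ : Measure 𝒳} {t : ℕ} {ρ : Measure (𝒳 × (Fin t → 𝒲))} (h : Tracks f Φ t ρ) :
    ρ.map (stateTrans f t) = Φ := h t le_rfl

theorem lower {𝒳 𝒲 : Type*} [MeasurableSpace 𝒳] [StandardBorelSpace 𝒳]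
    [MeasurableSpace 𝒲] [StandardBorelSpace 𝒲]
    (R : Measure 𝒲) [IsProbabilityMeasure R] (f : 𝒳 × 𝒲 → 𝒳) (hf : Measurable f)
    (Φ : Measure 𝒳) [IsProbabilityMeasure Φ] (t : ℕ) :
    ∀ ρ : Measure (𝒳 × (Fin t → 𝒲)), IsProbabilityMeasure ρ → Tracks f Φ t ρ →
      t * reqSupply f R Φ Φ
        ≤ InformationTheory.klDiv ρ (Φ.prod (Measure.pi fun _ : Fin t => R)) := by
  induction t with
  | zero => intro ρ _ _; simp
  | succ t ih =>
    intro ρ hρ htr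
    have hs := measurable_splitE (𝒳 := 𝒳) (𝒲 := 𝒲) t
    have hF := measurable_stateTrans f hf t
    -- split the law
    set σ : Measure ((𝒳 × (Fin t → 𝒲)) × 𝒲) := ρ.map (splitE t) with hσ
    have hσp : IsProbabilityMeasure σ := Measure.isProbabilityMeasure_map hs.aemeasurable
    set P : Measure (𝒳 × (Fin t → 𝒲)) := σ.map Prod.fst with hP
    have hPp : IsProbabilityMeasure P := Measure.isProbabilityMeasure_map measurable_fst.aemeasurable
    have hPtr : Tracks f Φ t P := by
      intro k hk
      rw [hP, hσ, Measure.map_map measurable_fst hs,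
        Measure.map_map (measurable_stateTrans_castLE f hf k t hk) (measurable_fst.comp hs)]
      exact htr k (hk.trans (Nat.le_succ t))
    have h1 := ih P hPp hPtr
    obtain ⟨κ, hκ, hκσ⟩ := exists_kernel P σ rfl
    have h2 : InformationTheory.klDiv σ
        ((Φ.prod (Measure.pi fun _ : Fin t => R)).prod R)
        ≤ InformationTheory.klDiv ρ (Φ.prod (Measure.pi fun _ : Fin (t + 1) => R)) := by
      rw [← map_splitE, hσ]
      exact InformationTheory.klDiv_map_le _ _ hs
    refine le_trans ?_ h2
    rw [← hκσ, ← Measure.compProd_const, InformationTheory.klDiv_compProd_eq_add, hκσ,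
      Measure.compProd_const]
    push_cast
    rw [add_mul, one_mul]
    refine add_le_add h1 ?_
    have hg : Measurable (Prod.map (stateTrans f t) (id : 𝒲 → 𝒲)) := hF.prodMap measurable_id
    have h3 := InformationTheory.klDiv_map_le σ (P.prod R) hg
    rw [← Measure.map_prod_map _ _ hF measurable_id, Measure.map_id, hPtr.last] at h3
    refine le_trans ?_ h3
    have : IsProbabilityMeasure (σ.map (Prod.map (stateTrans f t) (id : 𝒲 → 𝒲))) :=
      Measure.isProbabilityMeasure_map hg.aemeasurable
    refine reqSupply_le f Φ Φ R _ ?_ ?_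
    · rw [Measure.map_map measurable_fst hg, ← hPtr.last, hP, Measure.map_map hF measurable_fst]
      rfl
    · rw [Measure.map_map hf hg, hσ, Measure.map_map (hf.comp hg) hs]
      exact htr.last

theorem upper {𝒳 𝒲 : Type*} [MeasurableSpace 𝒳] [StandardBorelSpace 𝒳]
    [MeasurableSpace 𝒲] [StandardBorelSpace 𝒲]
    (R : Measure 𝒲) [IsProbabilityMeasure R] (f : 𝒳 × 𝒲 → 𝒳) (hf : Measurable f)
    (Φ : Measure 𝒳) [IsProbabilityMeasure Φ] (κ : Kernel 𝒳 𝒲) [IsMarkovKernel κ]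
    (hac : ∀ᵐ x ∂Φ, κ x ≪ R) (hmap : (Φ ⊗ₘ κ).map f = Φ) (t : ℕ) :
    ∃ ρ : Measure (𝒳 × (Fin t → 𝒲)), IsProbabilityMeasure ρ ∧ Tracks f Φ t ρ ∧
      InformationTheory.klDiv ρ (Φ.prod (Measure.pi fun _ : Fin t => R))
        ≤ t * InformationTheory.klDiv (Φ ⊗ₘ κ) (Φ.prod R) := by
  induction t with
  | zero =>
    refine ⟨Φ.prod (Measure.pi fun _ : Fin 0 => R), inferInstance, ?_, by simp⟩
    intro k hk
    obtain rfl : k = 0 := by omega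
    change (Φ.prod (Measure.pi fun _ : Fin 0 => R)).map Prod.fst = Φ
    simp
  | succ t ih =>
    obtain ⟨P, hP, htr, hkl⟩ := ih
    have hF := measurable_stateTrans f hf t
    have hj := measurable_joinE (𝒳 := 𝒳) (𝒲 := 𝒲) t
    set κ' : Kernel (𝒳 × (Fin t → 𝒲)) 𝒲 := κ.comap (stateTrans f t) hF with hκ'
    have hlast : (P ⊗ₘ κ').map (Prod.map (stateTrans f t) (id : 𝒲 → 𝒲)) = Φ ⊗ₘ κ := by
      ext s hs
      rw [Measure.map_apply (hF.prodMap measurable_id) hs,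
        Measure.compProd_apply ((hF.prodMap measurable_id) hs), Measure.compProd_apply hs,
        ← htr.last, lintegral_map (Kernel.measurable_kernel_prodMk_left hs) hF]
      rfl
    refine ⟨(P ⊗ₘ κ').map (joinE t), Measure.isProbabilityMeasure_map hj.aemeasurable, ?_, ?_⟩
    · intro k hk
      rw [Measure.map_map (measurable_stateTrans_castLE f hf k (t + 1) hk) hj]
      rcases Nat.lt_or_ge t k with h | h
      · obtain rfl : k = t + 1 := by omega
        have : (fun p : 𝒳 × (Fin (t + 1) → 𝒲) =>
            stateTrans f (t + 1) (p.1, fun i => p.2 (i.castLE hk))) ∘ joinE t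
            = f ∘ Prod.map (stateTrans f t) (id : 𝒲 → 𝒲) := by
          funext p
          change (fun q => f (stateTrans f t q.1, q.2)) (splitE t (joinE t p)) = _
          rw [splitE_joinE]
          rfl
        rw [this, ← Measure.map_map hf (hF.prodMap measurable_id), hlast, hmap]
      · have : (fun p : 𝒳 × (Fin (t + 1) → 𝒲) =>
            stateTrans f k (p.1, fun i => p.2 (i.castLE hk))) ∘ joinE t
            = (fun p : 𝒳 × (Fin t → 𝒲) =>
                stateTrans f k (p.1, fun i => p.2 (i.castLE h))) ∘ Prod.fst := by
          funext p
          change (fun q : (𝒳 × (Fin t → 𝒲)) × 𝒲 =>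
            stateTrans f k (q.1.1, fun i => q.1.2 (i.castLE h))) (splitE t (joinE t p)) = _
          rw [splitE_joinE]
          rfl
        rw [this, ← Measure.map_map (measurable_stateTrans_castLE f hf k t h) measurable_fst]
        have hfst : (P ⊗ₘ κ').map Prod.fst = P := Measure.fst_compProd P κ'
        rw [hfst]
        exact htr k h
    · rw [← map_joinE]
      refine (InformationTheory.klDiv_map_le _ _ hj).trans ?_
      rw [← Measure.compProd_const, InformationTheory.klDiv_compProd_eq_add,
        Measure.compProd_const, kl_cond_comap Φ R κ hac P _ hF htr.last]
      push_cast
      rw [add_mul, one_mul]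
      exact add_le_add hkl le_rfl


/-- State distribution tracking: the minimum conditional relative entropy supply required
to keep the state distribution equal to `Φ` at all times `k = 1, …, t` equals `t` times the
one-step quantity `J_1(Φ, Φ)` (with one-step transition map `f` and nominal one-step noise
distribution `R`). -/
theorem reqSupply_tracking
    {𝒳 𝒲 : Type*} [MeasurableSpace 𝒳] [StandardBorelSpace 𝒳]
    [MeasurableSpace 𝒲] [StandardBorelSpace 𝒲]
    (R : Measure 𝒲) [IsProbabilityMeasure R]
    (f : 𝒳 × 𝒲 → 𝒳) (hf : Measurable f)
    (t : ℕ) (ht : 1 ≤ t)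
    (Φ : Measure 𝒳) [IsProbabilityMeasure Φ] :
    (⨅ (κ : Kernel 𝒳 (Fin t → 𝒲)) (_ : IsMarkovKernel κ)
        (_ : ∀ᵐ x ∂Φ, κ x ≪ Measure.pi fun _ => R)
        (_ : ∀ k, 1 ≤ k → ∀ hk : k ≤ t,
          ((Φ ⊗ₘ κ).map fun p => stateTrans f k (p.1, fun i => p.2 (i.castLE hk))) = Φ),
        ∫⁻ x, klDiv (κ x) (Measure.pi fun _ => R) ∂Φ)
      = t * reqSupply f R Φ Φ := by
  have hpi : IsProbabilityMeasure (Measure.pi fun _ : Fin t => R) := inferInstance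
  apply le_antisymm
  · have ht0 : (t : ℝ≥0∞) ≠ 0 := by
      simp only [ne_eq, Nat.cast_eq_zero]
      omega
    have htt : (t : ℝ≥0∞) ≠ ∞ := ENNReal.natCast_ne_top t
    rw [mul_comm, ← ENNReal.div_le_iff_le_mul (Or.inl ht0) (Or.inl htt), reqSupply]
    refine le_iInf fun κ => le_iInf fun hκ => le_iInf fun hac => le_iInf fun hmap => ?_
    rw [ENNReal.div_le_iff_le_mul (Or.inl ht0) (Or.inl htt), mul_comm, kl_cond' Φ R κ hac]
    obtain ⟨ρ, hρ, htr, hkl⟩ := upper R f hf Φ κ hac hmap t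
    refine le_trans ?_ hkl
    by_cases hfin : InformationTheory.klDiv ρ (Φ.prod (Measure.pi fun _ : Fin t => R)) = ∞
    · rw [hfin]; exact le_top
    obtain ⟨κ', hκ', h1, h2, h3⟩ :=
      exists_kernel_kl Φ (Measure.pi fun _ : Fin t => R) ρ (htr 0 (Nat.zero_le t)) hfin
    rw [← h3]
    refine iInf_le_of_le κ' (iInf_le_of_le hκ' (iInf_le_of_le h2 (iInf_le_of_le ?_ le_rfl)))
    intro k _ hk
    rw [h1]
    exact htr k hk
  · refine le_iInf fun κ => le_iInf fun hκ => le_iInf fun hac => le_iInf fun hmap => ?_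
    rw [kl_cond' Φ _ κ hac]
    refine lower R f hf Φ t (Φ ⊗ₘ κ) inferInstance ?_
    intro k hk
    rcases Nat.eq_zero_or_pos k with rfl | hk0
    · exact Measure.fst_compProd Φ κ
    · exact hmap k hk0 hk
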